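/- Let E be a real normed vector space, let R : E → E be any map, and let Δt ≥ 0. Assume the forward-Euler step is nonexpansive from the origin, i.e. ‖u + Δt R(u)‖ ≤ ‖u‖ for all u ∈ E. Define, for f ∈ E, the third-order TVD Runge–Kutta update: f^{(1)} = f + Δt R(f); f^{(2)} = (1/4)(3 f + f^{(1)} + Δt R(f^{(1)})); f⁺ = (1/3)(f + 2 f^{(2)} + 2 Δt R(f^{(2)})). Then ‖f⁺‖ ≤ ‖f‖. -/

import Mathlib

/-- Stability of the third-order TVD Runge–Kutta method as a convex combination of
forward Euler steps (Section 2.3 of the paper): if the forward Euler step is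
nonexpansive from the origin, so is the full third-order TVD RK update. -/
theorem stmt_9 {E : Type*} [NormedAddCommGroup E] [NormedSpace ℝ E]
    (R : E → E) (Δt : ℝ) (hΔt : 0 ≤ Δt)
    (hEuler : ∀ u : E, ‖u + Δt • R u‖ ≤ ‖u‖) (f : E) :
    ‖(1 / 3 : ℝ) • (f + (2 : ℝ) • ((1 / 4 : ℝ) • ((3 : ℝ) • f + (f + Δt • R f)
          + Δt • R (f + Δt • R f)))
        + (2 : ℝ) • Δt • R ((1 / 4 : ℝ) • ((3 : ℝ) • f + (f + Δt • R f)
          + Δt • R (f + Δt • R f))))‖ ≤ ‖f‖ := by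
  have h1 := hEuler f
  generalize f + Δt • R f = g at h1 ⊢
  have h2 := hEuler g
  have h3 : ‖(1 / 4 : ℝ) • ((3 : ℝ) • f + g + Δt • R g)‖ ≤ ‖f‖ := by
    have e : (1 / 4 : ℝ) • ((3 : ℝ) • f + g + Δt • R g)
        = (3 / 4 : ℝ) • f + (1 / 4 : ℝ) • (g + Δt • R g) := by module
    rw [e]
    refine (norm_add_le _ _).trans ?_
    rw [norm_smul, norm_smul, Real.norm_of_nonneg (by norm_num), Real.norm_of_nonneg (by norm_num)]
    linarith
  generalize (1 / 4 : ℝ) • ((3 : ℝ) • f + g + Δt • R g) = k at h3 ⊢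
  have h4 := hEuler k
  have e : (1 / 3 : ℝ) • (f + (2 : ℝ) • k + (2 : ℝ) • Δt • R k)
      = (1 / 3 : ℝ) • f + (2 / 3 : ℝ) • (k + Δt • R k) := by module
  rw [e]
  refine (norm_add_le _ _).trans ?_
  rw [norm_smul, norm_smul, Real.norm_of_nonneg (by norm_num), Real.norm_of_nonneg (by norm_num)]
  linarith
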